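/- arXiv:1002.4920 — 2 statements merged into one kernel-verified Lean document; each statement's English description precedes it below -/
import Mathlib

section
/- Let H be a complex Hilbert space and M a von Neumann algebra acting on H. Let ω : M → ℂ be a positive bounded linear functional with the property that for every ε > 0 there exists a finite-rank orthogonal projection p ∈ M with ω(1 − p) ≤ ε. Let (ρ_i)_{i ∈ I} be a net of positive bounded linear functionals on M with sup_i ‖ρ_i‖ < ∞, such that lim_i ρ_i(x) = ω(x) for every x ∈ M that is a compact operator on H, and lim_i ρ_i(1) = ω(1). Then lim_i ‖ρ_i − ω‖ = 0. -/
open scoped ComplexOrder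

/-!
For a positive functional `φ` and a projection `p`, the Cauchy–Schwarz inequality bounds
`φ x - φ (p x p)` by `2 √(φ 1 · φ (1 - p)) ‖x‖`: a positive functional with little mass on `1 - p`
nearly lives on the corner `p A p`. If `p` has finite rank this corner is finite-dimensional, so
that pointwise convergence there is norm convergence, and convergence at `1` and at `p` passes the
smallness of `ω (1 - p)` on to `ρ i (1 - p)`. Hence
`limsup ‖ρ i - ω‖ ≤ 4 √(ω 1 · ω (1 - p))`, and the right-hand side is as small as one likes.
-/

open Filter Topology

/-- Positivity of a functional on a `*`-algebra, `φ (a* a) ≥ 0`. It is phrased through the elements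
`a* a` so that no order on the algebra is needed; linearity is not part of the predicate. -/
def IsPositiveFunctional {A : Type*} [Mul A] [Star A] (φ : A → ℂ) : Prop :=
  ∀ a, 0 ≤ φ (star a * a)

namespace IsPositiveFunctional

section CauchySchwarz

variable {A F : Type*} [NonUnitalRing A] [StarRing A] [Module ℂ A] [StarModule ℂ A]
  [IsScalarTower ℂ A A] [SMulCommClass ℂ A A] [FunLike F A ℂ] [LinearMapClass F ℂ A ℂ] {φ : F}

lemma conj_apply_star_mul (hφ : IsPositiveFunctional φ) (a b : A) :
    starRingEnd ℂ (φ (star b * a)) = φ (star a * b) := by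
  have im_eq_zero (c : A) : (φ (star c * c)).im = 0 := (Complex.nonneg_iff.1 (hφ c)).2.symm
  have ha := im_eq_zero a
  have hb := im_eq_zero b
  have him := im_eq_zero (a + b)
  have hre := im_eq_zero (a + Complex.I • b)
  simp only [star_add, star_smul, add_mul, mul_add, map_add, smul_mul_assoc, mul_smul_comm,
    map_smul, Complex.add_im, smul_eq_mul, Complex.mul_im, Complex.I_re, Complex.I_im,
    Complex.star_def, Complex.conj_I, Complex.neg_re, Complex.neg_im, Complex.mul_re] at him hre
  apply Complex.ext
  · rw [Complex.conj_re]; linarith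
  · rw [Complex.conj_im]; linarith

/-- The semi-inner product `⟪a, b⟫ = φ (a* b)` of the GNS construction. -/
abbrev preInnerProductSpaceCore (hφ : IsPositiveFunctional φ) : PreInnerProductSpace.Core ℂ A where
  inner a b := φ (star a * b)
  conj_inner_symm := hφ.conj_apply_star_mul
  re_inner_nonneg a := (Complex.nonneg_iff.1 (hφ a)).1
  add_left a b c := by rw [star_add, add_mul, map_add]
  smul_left a b r := by rw [star_smul, smul_mul_assoc, map_smul, smul_eq_mul]; rfl

lemma norm_apply_star_mul_sq_le (hφ : IsPositiveFunctional φ) (a b : A) :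
    ‖φ (star a * b)‖ ^ 2 ≤ ‖φ (star a * a)‖ * ‖φ (star b * b)‖ := by
  let _ := hφ.preInnerProductSpaceCore
  calc ‖φ (star a * b)‖ ^ 2 = ‖φ (star a * b)‖ * ‖φ (star b * a)‖ := by
        rw [← hφ.conj_apply_star_mul a b, RCLike.norm_conj, sq]
    _ ≤ (φ (star a * a)).re * (φ (star b * b)).re :=
        InnerProductSpace.Core.inner_mul_inner_self_le a b
    _ = ‖φ (star a * a)‖ * ‖φ (star b * b)‖ := by
        rw [Complex.re_eq_norm.2 (hφ a), Complex.re_eq_norm.2 (hφ b)]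

end CauchySchwarz

lemma apply_nonneg_of_isStarProjection {A : Type*} [Mul A] [Star A] {φ : A → ℂ}
    (hφ : IsPositiveFunctional φ) {p : A} (hp : IsStarProjection p) : 0 ≤ φ p := by
  have h := hφ p
  rwa [hp.isSelfAdjoint.star_eq, hp.isIdempotentElem.eq] at h

lemma norm_apply_star {A F : Type*} [Ring A] [StarRing A] [Algebra ℂ A] [StarModule ℂ A]
    [FunLike F A ℂ] [LinearMapClass F ℂ A ℂ] {φ : F} (hφ : IsPositiveFunctional φ) (a : A) :
    ‖φ (star a)‖ = ‖φ a‖ := by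
  have h := hφ.conj_apply_star_mul a 1
  rw [star_one, one_mul, mul_one] at h
  rw [← h, RCLike.norm_conj]

section NormBounds

variable {A : Type*} [NormedRing A] [StarRing A] [NormedAlgebra ℂ A] [StarModule ℂ A]
  {φ : A →L[ℂ] ℂ}

section NormedStarGroup

variable [NormedStarGroup A]

lemma opNorm_le_norm_apply_one (hφ : IsPositiveFunctional φ) : ‖φ‖ ≤ ‖φ 1‖ := by
  have norm_sq_le (x : A) : ‖φ x‖ ^ 2 ≤ ‖φ 1‖ * ‖φ‖ * ‖x‖ ^ 2 := calc
    ‖φ x‖ ^ 2 ≤ ‖φ 1‖ * ‖φ (star x * x)‖ := by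
      simpa only [star_one, one_mul] using hφ.norm_apply_star_mul_sq_le 1 x
    _ ≤ ‖φ 1‖ * (‖φ‖ * (‖star x‖ * ‖x‖)) := by
      gcongr
      exact φ.le_opNorm_of_le (norm_mul_le _ _)
    _ = ‖φ 1‖ * ‖φ‖ * ‖x‖ ^ 2 := by rw [norm_star]; ring
  have le_sqrt : ‖φ‖ ≤ √(‖φ 1‖ * ‖φ‖) := φ.opNorm_le_bound (Real.sqrt_nonneg _) fun x ↦ by
    rw [← Real.sqrt_sq (norm_nonneg x), ← Real.sqrt_mul (by positivity)]
    exact Real.le_sqrt_of_sq_le (norm_sq_le x)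
  rw [Real.le_sqrt (by positivity) (by positivity), sq] at le_sqrt
  obtain h | h := (norm_nonneg φ).eq_or_lt
  · exact h ▸ norm_nonneg _
  · exact le_of_mul_le_mul_right le_sqrt h

lemma norm_apply_projection_mul_le (hφ : IsPositiveFunctional φ) {q : A}
    (hq : IsStarProjection q) (x : A) :
    ‖φ (q * x)‖ ≤ √(‖φ 1‖ * ‖φ q‖) * ‖x‖ := by
  rw [← Real.sqrt_sq (norm_nonneg x), ← Real.sqrt_mul (by positivity)]
  apply Real.le_sqrt_of_sq_le
  calc ‖φ (q * x)‖ ^ 2 ≤ ‖φ q‖ * ‖φ (star x * x)‖ := by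
        simpa only [hq.isSelfAdjoint.star_eq, hq.isIdempotentElem.eq]
          using hφ.norm_apply_star_mul_sq_le q x
    _ ≤ ‖φ q‖ * (‖φ 1‖ * (‖star x‖ * ‖x‖)) := by
        gcongr
        exact φ.le_of_opNorm_le_of_le hφ.opNorm_le_norm_apply_one (norm_mul_le _ _)
    _ = ‖φ 1‖ * ‖φ q‖ * ‖x‖ ^ 2 := by rw [norm_star]; ring

lemma norm_apply_mul_projection_le (hφ : IsPositiveFunctional φ) {q : A}
    (hq : IsStarProjection q) (x : A) :
    ‖φ (x * q)‖ ≤ √(‖φ 1‖ * ‖φ q‖) * ‖x‖ := by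
  have h := hφ.norm_apply_projection_mul_le hq (star x)
  rwa [← hφ.norm_apply_star, star_mul, star_star, hq.isSelfAdjoint.star_eq, norm_star] at h

end NormedStarGroup

lemma norm_apply_sub_apply_compression_le [CStarRing A] (hφ : IsPositiveFunctional φ) {p : A}
    (hp : IsStarProjection p) (x : A) :
    ‖φ x - φ (p * x * p)‖ ≤ 2 * √(‖φ 1‖ * ‖φ (1 - p)‖) * ‖x‖ := by
  have hp' := hp.one_sub
  have norm_projection_mul_le : ‖p * x‖ ≤ ‖x‖ :=
    (norm_mul_le p x).trans (mul_le_of_le_one_left (norm_nonneg x) (hp.norm_le p))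
  calc ‖φ x - φ (p * x * p)‖ = ‖φ ((1 - p) * x) + φ (p * x * (1 - p))‖ := by
        rw [← map_sub, ← map_add]
        congr 2
        noncomm_ring
    _ ≤ √(‖φ 1‖ * ‖φ (1 - p)‖) * ‖x‖ + √(‖φ 1‖ * ‖φ (1 - p)‖) * ‖p * x‖ :=
        norm_add_le_of_le (hφ.norm_apply_projection_mul_le hp' x)
          (hφ.norm_apply_mul_projection_le hp' (p * x))
    _ ≤ √(‖φ 1‖ * ‖φ (1 - p)‖) * ‖x‖ + √(‖φ 1‖ * ‖φ (1 - p)‖) * ‖x‖ := by gcongr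
    _ = 2 * √(‖φ 1‖ * ‖φ (1 - p)‖) * ‖x‖ := by ring

end NormBounds

end IsPositiveFunctional

/-- The corner `p A p = {p x p | x ∈ A}`, as a `K`-subspace of the algebra `A`. It is defined for
every `p`, although the word is usual only for idempotents. -/
def corner (K : Type*) {A : Type*} [CommSemiring K] [Semiring A] [Algebra K A] (p : A) :
    Submodule K A :=
  LinearMap.range (LinearMap.mulLeftRight K (p, p))

lemma mul_mul_mem_corner {K A : Type*} [CommSemiring K] [Semiring A] [Algebra K A] (p x : A) :
    p * x * p ∈ corner K p :=
  ⟨x, rfl⟩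

section FiniteDimensional

variable {K : Type*} [Field K]

lemma finiteDimensional_corner_of_finiteDimensional_range {V : Type*} [AddCommGroup V] [Module K V]
    (p : Module.End K V) [FiniteDimensional K (LinearMap.range p)] :
    FiniteDimensional K (corner K p) := by
  let R := LinearMap.range p
  let extend : Module.End K R →ₗ[K] Module.End K V :=
    LinearMap.lcomp K V p.rangeRestrict ∘ₗ R.subtype.compRight K
  have corner_le : corner K p ≤ LinearMap.range extend := by
    rintro _ ⟨x, rfl⟩
    exact ⟨p.rangeRestrict ∘ₗ x ∘ₗ R.subtype, rfl⟩
  exact Submodule.finiteDimensional_of_le corner_le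

lemma finiteDimensional_corner_of_injective {A B : Type*} [Ring A] [Algebra K A] [Ring B]
    [Algebra K B] {f : A →ₐ[K] B} (hf : Function.Injective f) (p : A)
    [FiniteDimensional K (corner K (f p))] : FiniteDimensional K (corner K p) := by
  have map_corner_le : (corner K p).map f.toLinearMap ≤ corner K (f p) := by
    rintro _ ⟨_, ⟨x, rfl⟩, rfl⟩
    exact ⟨f x, by simp⟩
  have := Submodule.finiteDimensional_of_le map_corner_le
  exact ((corner K p).equivMapOfInjective f.toLinearMap hf).symm.finiteDimensional

end FiniteDimensional

section Convergence

lemma isInducing_clm_coeFn {𝕜 E F : Type*} [NontriviallyNormedField 𝕜]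
    [CompleteSpace 𝕜] [NormedAddCommGroup E] [NormedSpace 𝕜 E] [FiniteDimensional 𝕜 E]
    [NormedAddCommGroup F] [NormedSpace 𝕜 F] :
    IsInducing (DFunLike.coe : (E →L[𝕜] F) → E → F) := by
  refine ⟨le_antisymm (continuous_iff_le_induced.1 ?_) (continuous_id_iff_le.1 ?_)⟩
  · exact continuous_pi fun x ↦ continuous_eval_const x
  · let := TopologicalSpace.induced (DFunLike.coe : (E →L[𝕜] F) → E → F) inferInstance
    exact (@continuous_clm_apply _ _ _ _ _ _ _ _ _ (_) _ _ _).2 fun x ↦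
      (continuous_apply x).comp continuous_induced_dom

lemma tendsto_norm_clm_sub_of_forall_tendsto_apply {𝕜 E F ι : Type*} [NontriviallyNormedField 𝕜]
    [CompleteSpace 𝕜] [NormedAddCommGroup E] [NormedSpace 𝕜 E] [FiniteDimensional 𝕜 E]
    [NormedAddCommGroup F] [NormedSpace 𝕜 F] {l : Filter ι} {f : ι → E →L[𝕜] F} {g : E →L[𝕜] F}
    (h : ∀ x, Tendsto (f · x) l (𝓝 (g x))) : Tendsto (fun i ↦ ‖f i - g‖) l (𝓝 0) :=
  tendsto_iff_norm_sub_tendsto_zero.1 <|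
    isInducing_clm_coeFn.tendsto_nhds_iff.2 <| tendsto_pi_nhds.2 h

variable {A : Type*} [NormedRing A] [StarRing A] [CStarRing A] [NormedAlgebra ℂ A]
  [StarModule ℂ A]

lemma IsPositiveFunctional.opNorm_sub_le_add_opNorm_domRestrict_sub {φ ψ : A →L[ℂ] ℂ}
    (hφ : IsPositiveFunctional φ) (hψ : IsPositiveFunctional ψ) {p : A} (hp : IsStarProjection p) :
    ‖φ - ψ‖ ≤ 2 * √(‖φ 1‖ * ‖φ (1 - p)‖) + 2 * √(‖ψ 1‖ * ‖ψ (1 - p)‖) +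
      ‖φ.domRestrict (corner ℂ p) - ψ.domRestrict (corner ℂ p)‖ := by
  refine ContinuousLinearMap.opNorm_le_bound _ (by positivity) fun x ↦ ?_
  have norm_compression_le : ‖p * x * p‖ ≤ ‖x‖ := by
    have hp1 := hp.norm_le p
    calc ‖p * x * p‖ ≤ ‖p‖ * ‖x‖ * ‖p‖ := norm_mul₃_le
      _ ≤ 1 * ‖x‖ * 1 := by gcongr
      _ = ‖x‖ := by ring
  have norm_apply_compression_le : ‖φ (p * x * p) - ψ (p * x * p)‖ ≤
      ‖φ.domRestrict (corner ℂ p) - ψ.domRestrict (corner ℂ p)‖ * ‖x‖ :=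
    (φ.domRestrict (corner ℂ p) - ψ.domRestrict (corner ℂ p)).le_opNorm_of_le
      (x := ⟨p * x * p, mul_mul_mem_corner p x⟩) norm_compression_le
  calc ‖(φ - ψ) x‖ = ‖φ x - φ (p * x * p) - (ψ x - ψ (p * x * p))
          + (φ (p * x * p) - ψ (p * x * p))‖ := by
        rw [sub_apply]
        congr 1
        ring
    _ ≤ 2 * √(‖φ 1‖ * ‖φ (1 - p)‖) * ‖x‖ + 2 * √(‖ψ 1‖ * ‖ψ (1 - p)‖) * ‖x‖ +
          ‖φ.domRestrict (corner ℂ p) - ψ.domRestrict (corner ℂ p)‖ * ‖x‖ :=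
        norm_add_le_of_le
          (norm_sub_le_of_le (hφ.norm_apply_sub_apply_compression_le hp x)
            (hψ.norm_apply_sub_apply_compression_le hp x))
          norm_apply_compression_le
    _ = _ := by ring

variable {ι : Type*} {l : Filter ι} {ω : A →L[ℂ] ℂ} {ρ : ι → A →L[ℂ] ℂ}

lemma eventually_opNorm_sub_lt (hω : IsPositiveFunctional ω)
    (hρ : ∀ i, IsPositiveFunctional (ρ i)) (h1 : Tendsto (ρ · 1) l (𝓝 (ω 1)))
    {p : A} (hp : IsStarProjection p) [FiniteDimensional ℂ (corner ℂ p)]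
    (hcorner : ∀ x ∈ corner ℂ p, Tendsto (ρ · x) l (𝓝 (ω x)))
    {ε : ℝ} (hε : 4 * √(‖ω 1‖ * ‖ω (1 - p)‖) < ε) : ∀ᶠ i in l, ‖ρ i - ω‖ < ε := by
  have tendsto_one_sub : Tendsto (fun i ↦ ρ i (1 - p)) l (𝓝 (ω (1 - p))) := by
    have hp_mem : p ∈ corner ℂ p := by
      have h := mul_mul_mem_corner (K := ℂ) p 1
      rwa [mul_one, hp.isIdempotentElem.eq] at h
    simpa only [map_sub] using h1.sub (hcorner p hp_mem)
  have tendsto_norm_restrict : Tendsto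
      (fun i ↦ ‖(ρ i).domRestrict (corner ℂ p) - ω.domRestrict (corner ℂ p)‖) l (𝓝 0) :=
    tendsto_norm_clm_sub_of_forall_tendsto_apply fun x ↦ hcorner x x.2
  have tendsto_bound := (((h1.norm.mul tendsto_one_sub.norm).sqrt.const_mul 2).add_const
    (2 * √(‖ω 1‖ * ‖ω (1 - p)‖))).add tendsto_norm_restrict
  have limit_lt : 2 * √(‖ω 1‖ * ‖ω (1 - p)‖) + 2 * √(‖ω 1‖ * ‖ω (1 - p)‖) + 0 < ε := by linarith
  filter_upwards [tendsto_bound.eventually_lt_const limit_lt] with i hi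
  exact ((hρ i).opNorm_sub_le_add_opNorm_domRestrict_sub hω hp).trans_lt hi

theorem tendsto_opNorm_sub_of_finiteDimensional_corner (hω : IsPositiveFunctional ω)
    (hρ : ∀ i, IsPositiveFunctional (ρ i)) (h1 : Tendsto (ρ · 1) l (𝓝 (ω 1)))
    (hp : ∀ ε : ℝ, 0 < ε → ∃ p : A, IsStarProjection p ∧ FiniteDimensional ℂ (corner ℂ p) ∧
      ω (1 - p) ≤ ε ∧ ∀ x ∈ corner ℂ p, Tendsto (ρ · x) l (𝓝 (ω x))) :
    Tendsto (fun i ↦ ‖ρ i - ω‖) l (𝓝 0) := by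
  rw [tendsto_order]
  refine ⟨fun a ha ↦ .of_forall fun i ↦ ha.trans_le (norm_nonneg _), fun ε hε ↦ ?_⟩
  have tendsto_sqrt : Tendsto (fun δ : ℝ ↦ 4 * √(‖ω 1‖ * δ)) (𝓝[>] 0) (𝓝 0) := by
    refine (Continuous.tendsto' ?_ 0 0 (by simp)).mono_left nhdsWithin_le_nhds
    fun_prop
  obtain ⟨δ, hδ, hδε⟩ :=
    (eventually_mem_nhdsWithin.and (tendsto_sqrt.eventually_lt_const hε)).exists
  obtain ⟨p, hp, hfin, hωp, hcorner⟩ := hp δ hδ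
  have norm_one_sub_le : ‖ω (1 - p)‖ ≤ δ := by
    rw [← Complex.re_eq_norm.2 (hω.apply_nonneg_of_isStarProjection hp.one_sub)]
    exact (Complex.le_def.1 hωp).1
  refine eventually_opNorm_sub_lt hω hρ h1 hp hcorner (lt_of_le_of_lt ?_ hδε)
  gcongr

end Convergence

section Operators

lemma isCompactOperator_of_finiteDimensional_range {𝕜 E F : Type*} [NontriviallyNormedField 𝕜]
    [LocallyCompactSpace 𝕜] [NormedAddCommGroup E] [NormedSpace 𝕜 E]
    [NormedAddCommGroup F] [NormedSpace 𝕜 F] (T : E →L[𝕜] F)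
    [FiniteDimensional 𝕜 (LinearMap.range (T : E →ₗ[𝕜] F))] : IsCompactOperator T := by
  have : ProperSpace 𝕜 := .of_locallyCompactSpace 𝕜
  let R := LinearMap.range (T : E →ₗ[𝕜] F)
  have compact_id : IsCompactOperator (id : R → R) :=
    (isCompactOperator_id_iff_finiteDimensional (𝕜 := 𝕜)).2 inferInstance
  exact (compact_id.comp_clm (T.codRestrict R fun v ↦ ⟨v, rfl⟩)).clm_comp R.subtypeL

variable {H : Type*} [NormedAddCommGroup H] [InnerProductSpace ℂ H] [CompleteSpace H]

lemma finiteDimensional_corner_of_finiteDimensional_range_coe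
    {S : StarSubalgebra ℂ (H →L[ℂ] H)} (p : S)
    [FiniteDimensional ℂ (LinearMap.range ((p : H →L[ℂ] H) : H →ₗ[ℂ] H))] :
    FiniteDimensional ℂ (corner ℂ p) := by
  let π : S →ₐ[ℂ] Module.End ℂ H :=
    (AlgHom.ofLinearMap (ContinuousLinearMap.coeLM ℂ) rfl fun _ _ ↦ rfl).comp S.subtype.toAlgHom
  have hπ : Function.Injective π := ContinuousLinearMap.coe_injective.comp Subtype.val_injective
  have : FiniteDimensional ℂ (LinearMap.range (π p)) := ‹_›
  have := finiteDimensional_corner_of_finiteDimensional_range (π p)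
  exact finiteDimensional_corner_of_injective hπ p

end Operators

theorem stmt2_general
    {H : Type*} [NormedAddCommGroup H] [InnerProductSpace ℂ H] [CompleteSpace H]
    (S : StarSubalgebra ℂ (H →L[ℂ] H)) {ι : Type*} {l : Filter ι}
    {ω : S →L[ℂ] ℂ} (hω : IsPositiveFunctional ω)
    (hωfr : ∀ ε : ℝ, 0 < ε → ∃ p : S, IsStarProjection p ∧
      FiniteDimensional ℂ (LinearMap.range ((p : H →L[ℂ] H) : H →ₗ[ℂ] H)) ∧ ω (1 - p) ≤ ε)
    {ρ : ι → S →L[ℂ] ℂ} (hρ : ∀ i, IsPositiveFunctional (ρ i))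
    (hfr : ∀ x : S, FiniteDimensional ℂ (LinearMap.range ((x : H →L[ℂ] H) : H →ₗ[ℂ] H)) →
      Tendsto (ρ · x) l (𝓝 (ω x)))
    (h1 : Tendsto (ρ · 1) l (𝓝 (ω 1))) :
    Tendsto (fun i ↦ ‖ρ i - ω‖) l (𝓝 0) := by
  refine tendsto_opNorm_sub_of_finiteDimensional_corner hω hρ h1 fun ε hε ↦ ?_
  obtain ⟨p, hp, hfin, hωp⟩ := hωfr ε hε
  refine ⟨p, hp, finiteDimensional_corner_of_finiteDimensional_range_coe p, hωp, ?_⟩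
  rintro _ ⟨x, rfl⟩
  exact hfr _ <| Submodule.finiteDimensional_of_le <|
    LinearMap.range_comp_le_range (((x * p : S) : H →L[ℂ] H) : H →ₗ[ℂ] H)
      ((p : H →L[ℂ] H) : H →ₗ[ℂ] H)

/-- **Arveson's lemma on convergence of nets of positive normal functionals.**
Let `M` be a von Neumann algebra on `H`, `ω` a positive bounded functional on `M` that is
approximated by finite-rank projections in `M` (the consequence of normality used for direct
sums of type I factors), and `(ρ_i)` a norm-bounded net of positive bounded functionals on `M`
converging to `ω` on the compact operators in `M` and at `1`.  Then `‖ρ_i − ω‖ → 0`. -/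
theorem stmt2
    {H : Type*} [NormedAddCommGroup H] [InnerProductSpace ℂ H] [CompleteSpace H]
    (M : VonNeumannAlgebra H)
    {ι : Type*} [Preorder ι] [IsDirected ι (· ≤ ·)] [Nonempty ι]
    (ω : ↥M.toStarSubalgebra →L[ℂ] ℂ)
    (hωpos : ∀ a : ↥M.toStarSubalgebra,
      ContinuousLinearMap.IsPositive (a : H →L[ℂ] H) → 0 ≤ ω a)
    (hωfr : ∀ ε : ℝ, 0 < ε → ∃ p : H →L[ℂ] H, p ∈ M ∧
      IsSelfAdjoint p ∧ IsIdempotentElem p ∧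
      FiniteDimensional ℂ ↥(LinearMap.range (p : H →ₗ[ℂ] H)) ∧
      ∀ q : ↥M.toStarSubalgebra, (q : H →L[ℂ] H) = 1 - p → ω q ≤ (ε : ℂ))
    (ρ : ι → (↥M.toStarSubalgebra →L[ℂ] ℂ))
    (hρpos : ∀ i, ∀ a : ↥M.toStarSubalgebra,
      ContinuousLinearMap.IsPositive (a : H →L[ℂ] H) → 0 ≤ ρ i a)
    (hbdd : ∃ C : ℝ, ∀ i, ‖ρ i‖ ≤ C)
    (hK : ∀ x : ↥M.toStarSubalgebra, IsCompactOperator ⇑(x : H →L[ℂ] H) →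
      Filter.Tendsto (fun i => ρ i x) Filter.atTop (nhds (ω x)))
    (h1 : Filter.Tendsto (fun i => ρ i 1) Filter.atTop (nhds (ω 1))) :
    Filter.Tendsto (fun i => ‖ρ i - ω‖) Filter.atTop (nhds 0) := by
  refine stmt2_general M.toStarSubalgebra
    (fun a ↦ hωpos _ (ContinuousLinearMap.isPositive_adjoint_comp_self (a : H →L[ℂ] H)))
    (fun ε hε ↦ ?_)
    (fun i a ↦ hρpos i _ (ContinuousLinearMap.isPositive_adjoint_comp_self (a : H →L[ℂ] H)))
    (fun x _ ↦ hK x (isCompactOperator_of_finiteDimensional_range (x : H →L[ℂ] H))) h1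
  obtain ⟨p, hpM, hsa, hid, hfin, hle⟩ := hωfr ε hε
  exact ⟨⟨p, hpM⟩, ⟨Subtype.ext hid, Subtype.ext hsa⟩, hfin, hle _ rfl⟩
end

section
/- Let d ≥ 1, k ≥ 1, and let Λ ⊆ {1,…,d}^ℤ be a nonempty k-step subshift of finite type with language Λ*. Let H_Λ := ℓ²(Λ*) with orthonormal basis (e_γ)_{γ ∈ Λ*}, let S_i ∈ B(H_Λ) be determined by S_i e_γ = e_{iγ} if iγ ∈ Λ* and 0 otherwise, and let 𝒯_Λ be the unital C*-subalgebra of B(H_Λ) generated by S₁,…,S_d. Let H be a complex Hilbert space and T₁,…,T_d ∈ B(H); for a word α = α₁⋯α_m write T^α := T_{α₁}⋯T_{α_m} (empty product = 1). Then the following are equivalent: (a) there exists a unital *-homomorphism π : 𝒯_Λ → B(H) with π(S_i) = T_i for all i and π(K) = 0 for every compact operator K ∈ 𝒯_Λ; (b) the tuple (T₁,…,T_d) satisfies the relations: T^α = 0 for every word α ∉ Λ*; T_i* T_j = 0 for all i ≠ j; Σ_{i=1}^d T_i T_i* = 1; and T_i* T_i = Σ_{α ∈ E_i^k} T^α (T^α)*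 for every i. Moreover, the homomorphism π in (a) is uniquely determined by T₁,…,T_d. -/
noncomputable section

/-- A finite word occurs as a block of consecutive entries of a bi-infinite sequence. -/
def OccursIn {d : ℕ} (w : List (Fin d)) (x : ℤ → Fin d) : Prop :=
  ∃ m : ℤ, ∀ i : Fin w.length, x (m + (i : ℕ)) = w.get i

/-- The language of `Λ ⊆ {1,…,d}^ℤ`: all finite words occurring as blocks of points of `Λ`. -/
def lang {d : ℕ} (Λ : Set (ℤ → Fin d)) : Set (List (Fin d)) :=
  {w | ∃ x ∈ Λ, OccursIn w x}

/-- `Λ` is a `k`-step subshift of finite type. -/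
def IsKStepSFT {d : ℕ} (k : ℕ) (Λ : Set (ℤ → Fin d)) : Prop :=
  ∃ W : Set (List (Fin d)), W.Finite ∧ (∀ w ∈ W, w ≠ [] ∧ w.length ≤ k + 1) ∧
    Λ = {x | ∀ w ∈ W, ¬ OccursIn w x}

/-- `H_Λ = ℓ²(Λ*)`, the Fock space of the subshift. -/
abbrev ShiftSp {d : ℕ} (Λ : Set (ℤ → Fin d)) : Type := lp (fun _ : ↥(lang Λ) => ℂ) 2

/-- The standard basis vector `e_γ` of `ℓ²(Λ*)`. -/
def eVec {d : ℕ} (Λ : Set (ℤ → Fin d)) (γ : ↥(lang Λ)) : ShiftSp Λ := lp.single 2 γ 1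

/-- `T^α = T_{α₁} ⋯ T_{α_m}` (empty product `= 1`). -/
def wordOp {d : ℕ} {A : Type*} [Monoid A] (T : Fin d → A) (α : List (Fin d)) : A :=
  (α.map T).prod

/-- `E_i^k = {α ∈ Λ^k : iα ∈ Λ*}`. -/
def Eik {d : ℕ} (Λ : Set (ℤ → Fin d)) (k : ℕ) (i : Fin d) : Set (List (Fin d)) :=
  {α | α ∈ lang Λ ∧ α.length = k ∧ (i :: α) ∈ lang Λ}

/-- `𝒯_Λ`: the unital C*-subalgebra of `B(ℓ²(Λ*))` generated by the creation operators. -/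
def genAlg {d : ℕ} (Λ : Set (ℤ → Fin d)) (S : Fin d → ShiftSp Λ →L[ℂ] ShiftSp Λ) :
    StarSubalgebra ℂ (ShiftSp Λ →L[ℂ] ShiftSp Λ) :=
  (StarAlgebra.adjoin ℂ (Set.range S)).topologicalClosure

/-!
Let `T` satisfy the relations, and let `V_n x = ∑_{|γ| = n} e_γ ⊗ (T^γ)* x` be the degree `n` part
of the Poisson kernel of `T`. The relations say that the `V_n : H → ℓ²(Λ*) ⊗ H` are isometries with
orthogonal ranges, that `(S_i* ⊗ 1) V_{n+1} = V_n T_i*` and, for `n ≥ k`, that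
`(S_i ⊗ 1) V_n = V_{n+1} T_i`. Hence the normalised sums `U_N = (N + 1)^(-1/2) (V_0 + ⋯ + V_N)`
asymptotically intertwine `S_i ⊗ 1` with `T_i` and `S_i* ⊗ 1` with `T_i*`. The pairs `(X, Y)` with
`(X ⊗ 1) U_N - U_N Y → 0` strongly, and likewise for the adjoints, form a closed `*`-algebra on
which `(X, Y) ↦ X` is isometric, since `‖Y‖ ≤ ‖X‖`; it is therefore the graph of a homomorphism
defined on a `C*`-algebra containing the `S_i`. As `X ⊗ 1` kills `V_n` for large `n` when `X`
vanishes on all long words, and the adjoint of a compact operator is a norm limit of such `X`, this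
homomorphism annihilates the compacts.

Conversely `S` satisfies the relations modulo finite rank operators: whether a word of length at
least `k` can be preceded by `i` depends only on its first `k` letters, so the last relation holds
on all long words. Uniqueness holds because a homomorphism is determined on generators.
-/

open Filter Topology

section AsympIntertwines

section NormedSpace

variable {ι 𝕜 H K : Type*} [NontriviallyNormedField 𝕜] [NormedAddCommGroup H] [NormedSpace 𝕜 H]
  [NormedAddCommGroup K] [NormedSpace 𝕜 K]

/-- The isometries `U n` asymptotically intertwine `X` and `Y` along `l`: `X Uₙ - Uₙ Y → 0` in the
strong operator topology. -/
def AsympIntertwines (l : Filter ι) (U : ι → H →ₗᵢ[𝕜] K) (X : K →L[𝕜] K) (Y : H →L[𝕜] H) : Prop :=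
  ∀ x, Tendsto (fun n => X (U n x) - U n (Y x)) l (𝓝 0)

namespace AsympIntertwines

variable {l : Filter ι} {U : ι → H →ₗᵢ[𝕜] K} {X X' : K →L[𝕜] K} {Y Y' : H →L[𝕜] H}

theorem add (h : AsympIntertwines l U X Y) (h' : AsympIntertwines l U X' Y') :
    AsympIntertwines l U (X + X') (Y + Y') := fun x => by
  simpa [add_sub_add_comm] using (h x).add (h' x)

theorem sub (h : AsympIntertwines l U X Y) (h' : AsympIntertwines l U X' Y') :
    AsympIntertwines l U (X - X') (Y - Y') := fun x => by
  simpa [sub_sub_sub_comm] using (h x).sub (h' x)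

theorem algebraMap (c : 𝕜) :
    AsympIntertwines l U (algebraMap 𝕜 (K →L[𝕜] K) c) (algebraMap 𝕜 (H →L[𝕜] H) c) := fun x => by
  simp [Algebra.algebraMap_eq_smul_one, tendsto_const_nhds]

theorem mul (h : AsympIntertwines l U X Y) (h' : AsympIntertwines l U X' Y') :
    AsympIntertwines l U (X * X') (Y * Y') := fun x => by
  have hX : Tendsto (fun n => X (X' (U n x) - U n (Y' x))) l (𝓝 0) :=
    (X.continuous.tendsto' 0 0 (map_zero X)).comp (h' x)
  simpa using hX.add (h (Y' x))

theorem norm_le [l.NeBot] (h : AsympIntertwines l U X Y) : ‖Y‖ ≤ ‖X‖ := by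
  refine Y.opNorm_le_bound (norm_nonneg X) fun x => ?_
  have hbound : ∀ n, ‖Y x‖ - ‖X‖ * ‖x‖ ≤ ‖X (U n x) - U n (Y x)‖ := fun n =>
    calc ‖Y x‖ - ‖X‖ * ‖x‖ ≤ ‖U n (Y x)‖ - ‖X (U n x)‖ := by
          rw [(U n).norm_map]
          exact sub_le_sub_left (by simpa using X.le_opNorm (U n x)) _
      _ ≤ ‖X (U n x) - U n (Y x)‖ := by
          rw [norm_sub_rev]
          exact norm_sub_norm_le _ _
  exact sub_nonpos.1 (ge_of_tendsto' (by simpa using (h x).norm) hbound)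

theorem unique [l.NeBot] (h : AsympIntertwines l U X Y) (h' : AsympIntertwines l U X Y') :
    Y = Y' :=
  sub_eq_zero.1 <| norm_le_zero_iff.1 <| by simpa using (h.sub h').norm_le

theorem isClosed_graph (l : Filter ι) (U : ι → H →ₗᵢ[𝕜] K) :
    IsClosed {p : (K →L[𝕜] K) × (H →L[𝕜] H) | AsympIntertwines l U p.1 p.2} := by
  have hLip : ∀ (x : H) (n : ι), LipschitzWith (2 * ‖x‖₊)
      fun p : (K →L[𝕜] K) × (H →L[𝕜] H) => p.1 (U n x) - U n (p.2 x) := fun x n => by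
    refine LipschitzWith.of_dist_le_mul fun p q => ?_
    have hfst : ‖(p - q).1 (U n x)‖ ≤ ‖p - q‖ * ‖x‖ := by
      simpa using (p - q).1.le_of_opNorm_le (norm_fst_le (p - q)) (U n x)
    have hsnd : ‖U n ((p - q).2 x)‖ ≤ ‖p - q‖ * ‖x‖ := by
      rw [(U n).norm_map]
      exact (p - q).2.le_of_opNorm_le (norm_snd_le (p - q)) x
    calc dist (p.1 (U n x) - U n (p.2 x)) (q.1 (U n x) - U n (q.2 x))
        = ‖(p - q).1 (U n x) - U n ((p - q).2 x)‖ := by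
          rw [dist_eq_norm]
          simp only [Prod.fst_sub, Prod.snd_sub, _root_.sub_apply, map_sub]
          congr 1
          abel
      _ ≤ ‖p - q‖ * ‖x‖ + ‖p - q‖ * ‖x‖ := (norm_sub_le _ _).trans (add_le_add hfst hsnd)
      _ = ↑(2 * ‖x‖₊) * dist p q := by
          rw [dist_eq_norm]
          push_cast
          ring
  simp only [AsympIntertwines, Set.ofPred_forall]
  exact isClosed_iInter fun x =>
    (LipschitzWith.uniformEquicontinuous _ _ (hLip x)).equicontinuous.isClosed_setOfPred_tendsto
      continuous_const

theorem of_tendsto {κ : Type*} {f : Filter κ} [f.NeBot] {Xs : κ → K →L[𝕜] K}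
    (hX : Tendsto Xs f (𝓝 X)) (h : ∀ m, AsympIntertwines l U (Xs m) Y) :
    AsympIntertwines l U X Y :=
  (isClosed_graph l U).mem_of_tendsto (hX.prodMk_nhds (tendsto_const_nhds (x := Y))) (.of_forall h)

end AsympIntertwines

end NormedSpace

section StarAlgebra

variable {ι A H K : Type*} [NormedRing A] [NormedAlgebra ℂ A] [StarRing A] [StarModule ℂ A]
  [NormedAddCommGroup H] [InnerProductSpace ℂ H] [CompleteSpace H]
  [NormedAddCommGroup K] [NormedSpace ℂ K]

/-- The pairs `(a, Y)` such that `U` asymptotically intertwines `ρ a` and `Y`, and also `ρ (star a)`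
and `star Y`. It is the graph of a `*`-homomorphism on its projection to `A`; as `K` need not be
complete, `ρ` is not required to preserve adjoints. -/
def intertwinerGraph (l : Filter ι) (U : ι → H →ₗᵢ[ℂ] K) (ρ : A →ₐ[ℂ] (K →L[ℂ] K)) :
    StarSubalgebra ℂ (A × (H →L[ℂ] H)) where
  carrier := {p | AsympIntertwines l U (ρ p.1) p.2 ∧ AsympIntertwines l U (ρ (star p.1)) (star p.2)}
  mul_mem' hp hq := by
    simp only [Set.mem_ofPred_eq, Prod.fst_mul, Prod.snd_mul, star_mul, map_mul] at hp hq ⊢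
    exact ⟨hp.1.mul hq.1, hq.2.mul hp.2⟩
  add_mem' hp hq := by
    simp only [Set.mem_ofPred_eq, Prod.fst_add, Prod.snd_add, star_add, map_add] at hp hq ⊢
    exact ⟨hp.1.add hq.1, hp.2.add hq.2⟩
  algebraMap_mem' c := by
    simp only [Set.mem_ofPred_eq, Prod.algebraMap_apply, ← algebraMap_star_comm, AlgHom.commutes]
    exact ⟨.algebraMap c, .algebraMap _⟩
  star_mem' hp := by
    simpa only [Set.mem_ofPred_eq, Prod.fst_star, Prod.snd_star, star_star] using hp.symm

variable {l : Filter ι} {U : ι → H →ₗᵢ[ℂ] K} {ρ : A →ₐ[ℂ] (K →L[ℂ] K)}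

theorem norm_eq_norm_fst_of_mem_intertwinerGraph [l.NeBot] (hρ : ∀ a, ‖ρ a‖ ≤ ‖a‖)
    {p : A × (H →L[ℂ] H)} (hp : p ∈ intertwinerGraph l U ρ) : ‖p‖ = ‖p.1‖ :=
  max_eq_left (hp.1.norm_le.trans (hρ p.1))

theorem isClosed_intertwinerGraph [ContinuousStar A] (l : Filter ι) (U : ι → H →ₗᵢ[ℂ] K)
    (hρ : Continuous ρ) :
    IsClosed (intertwinerGraph l U ρ : Set (A × (H →L[ℂ] H))) := by
  have hfst : Continuous fun p : A × (H →L[ℂ] H) => (ρ p.1, p.2) := by fun_prop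
  have hstar : Continuous fun p : A × (H →L[ℂ] H) => (ρ (star p.1), star p.2) := by fun_prop
  exact ((AsympIntertwines.isClosed_graph l U).preimage hfst).inter
    ((AsympIntertwines.isClosed_graph l U).preimage hstar)

theorem exists_starAlgHom_mem_intertwinerGraph [CompleteSpace A] [ContinuousStar A] [l.NeBot]
    (hρ : ∀ a, ‖ρ a‖ ≤ ‖a‖) {s : Set A} (hs : ∀ a ∈ s, ∃ Y, (a, Y) ∈ intertwinerGraph l U ρ) :
    ∃ π : (StarAlgebra.adjoin ℂ s).topologicalClosure →⋆ₐ[ℂ] (H →L[ℂ] H),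
      ∀ a : (StarAlgebra.adjoin ℂ s).topologicalClosure,
        ((a : A), π a) ∈ intertwinerGraph l U ρ := by
  let f : intertwinerGraph l U ρ →⋆ₐ[ℂ] A :=
    (StarAlgHom.fst ℂ A (H →L[ℂ] H)).comp (intertwinerGraph l U ρ).subtype
  have hf : Isometry f :=
    AddMonoidHomClass.isometry_of_norm f fun p =>
      (norm_eq_norm_fst_of_mem_intertwinerGraph hρ p.2).symm
  have hρ_cont : Continuous ρ :=
    AddMonoidHomClass.continuous_of_bound ρ 1 fun a => by simpa using hρ a
  have : CompleteSpace (intertwinerGraph l U ρ) :=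
    (isClosed_intertwinerGraph l U hρ_cont).completeSpace_coe
  have hle : (StarAlgebra.adjoin ℂ s).topologicalClosure ≤ f.range :=
    StarSubalgebra.topologicalClosure_minimal
      (StarAlgebra.adjoin_le fun a ha => let ⟨Y, hY⟩ := hs a ha; ⟨⟨(a, Y), hY⟩, rfl⟩)
      hf.isClosedEmbedding.isClosed_range
  let e := StarAlgEquiv.ofInjective f hf.injective
  let π := ((StarAlgHom.snd ℂ A (H →L[ℂ] H)).comp (intertwinerGraph l U ρ).subtype).comp
    ((e.symm : f.range →⋆ₐ[ℂ] intertwinerGraph l U ρ).comp (StarSubalgebra.inclusion hle))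
  refine ⟨π, fun a => ?_⟩
  let p := e.symm (StarSubalgebra.inclusion hle a)
  have hp : (p : A × (H →L[ℂ] H)).1 = a := congrArg Subtype.val (e.apply_symm_apply _)
  have : ((a : A), π a) = (p : A × (H →L[ℂ] H)) := Prod.ext hp.symm rfl
  exact this ▸ p.2

end StarAlgebra

end AsympIntertwines

theorem starAlgHom_ext_topologicalClosure_adjoin {A B : Type*} [CStarAlgebra A] [CStarAlgebra B]
    {s : Set A} {φ ψ : (StarAlgebra.adjoin ℂ s).topologicalClosure →⋆ₐ[ℂ] B}
    (h : ∀ a : (StarAlgebra.adjoin ℂ s).topologicalClosure, (a : A) ∈ s → φ a = ψ a) : φ = ψ := by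
  have : IsClosed ((StarAlgebra.adjoin ℂ s).topologicalClosure : Set A) :=
    StarSubalgebra.isClosed_topologicalClosure _
  have hcont (π : (StarAlgebra.adjoin ℂ s).topologicalClosure →⋆ₐ[ℂ] B) : Continuous π :=
    AddMonoidHomClass.continuous_of_bound π 1 fun a => by
      simpa using NonUnitalStarAlgHom.norm_apply_le π a
  exact StarAlgHom.ext_topologicalClosure (hcont φ) (hcont ψ)
    (StarAlgHom.ext_adjoin fun a ha => h _ ha)

section CesaroIsometry

variable {𝕜 H K : Type*} [RCLike 𝕜] [NormedAddCommGroup H] [InnerProductSpace 𝕜 H]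
  [NormedAddCommGroup K] [InnerProductSpace 𝕜 K] {V : ℕ → H →ₗᵢ[𝕜] K}

/-- The normalised sum `(N + 1)^(-1/2) (V₀ + ⋯ + V_N)` of isometries with orthogonal ranges.
Shifting the index of the `V n` moves it by `O(N^(-1/2))`. -/
def cesaroIsometry (hV : OrthogonalFamily 𝕜 (fun _ => H) V) (N : ℕ) : H →ₗᵢ[𝕜] K where
  toLinearMap := ((√(N + 1) : ℝ) : 𝕜)⁻¹ • ∑ n ∈ Finset.range (N + 1), (V n).toLinearMap
  norm_map' x := by
    have hsum : ‖∑ n ∈ Finset.range (N + 1), V n x‖ = √(N + 1) * ‖x‖ := by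
      rw [← sq_eq_sq₀ (norm_nonneg _) (by positivity), hV.norm_sum (fun _ => x), mul_pow,
        Real.sq_sqrt (by positivity)]
      simp
    have hpos : 0 < √((N : ℝ) + 1) := by positivity
    simp [norm_smul, hsum, abs_of_pos hpos, hpos.ne']

theorem cesaroIsometry_apply (hV : OrthogonalFamily 𝕜 (fun _ => H) V) (N : ℕ) (x : H) :
    cesaroIsometry hV N x = ((√(N + 1) : ℝ) : 𝕜)⁻¹ • ∑ n ∈ Finset.range (N + 1), V n x := by
  simp [cesaroIsometry]

theorem tendsto_inv_sqrt_add_one :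
    Tendsto (fun N : ℕ => ((√(N + 1) : ℝ) : 𝕜)⁻¹) atTop (𝓝 0) := by
  have h : Tendsto (fun N : ℕ => (√((N : ℝ) + 1))⁻¹) atTop (𝓝 0) :=
    (Real.tendsto_sqrt_atTop.comp
      (tendsto_atTop_add_const_right _ 1 tendsto_natCast_atTop_atTop)).inv_tendsto_atTop
  simpa [Function.comp_def] using
    (RCLike.continuous_ofReal (K := 𝕜)).tendsto' 0 0 (by simp) |>.comp h

variable {X : K →L[𝕜] K} {Y : H →L[𝕜] H}

theorem asympIntertwines_cesaroIsometry_of_bounded (hV : OrthogonalFamily 𝕜 (fun _ => H) V)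
    (h : ∀ x, ∃ C, ∀ᶠ N in atTop, ‖∑ n ∈ Finset.range (N + 1), (X (V n x) - V n (Y x))‖ ≤ C) :
    AsympIntertwines atTop (cesaroIsometry hV) X Y := fun x => by
  obtain ⟨C, hC⟩ := h x
  simpa [cesaroIsometry_apply, smul_sub, Finset.smul_sum] using
    (tendsto_inv_sqrt_add_one (𝕜 := 𝕜)).zero_smul_isBoundedUnder_le
      (isBoundedUnder_of_eventually_le hC)

theorem asympIntertwines_cesaroIsometry_of_lowering (hV : OrthogonalFamily 𝕜 (fun _ => H) V)
    (h : ∀ n x, X (V (n + 1) x) = V n (Y x)) :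
    AsympIntertwines atTop (cesaroIsometry hV) X Y := by
  refine asympIntertwines_cesaroIsometry_of_bounded hV fun x =>
    ⟨‖X (V 0 x)‖ + ‖Y x‖, .of_forall fun N => ?_⟩
  have htelescope : ∑ n ∈ Finset.range (N + 1), (X (V n x) - V n (Y x)) =
      X (V 0 x) - V N (Y x) := by
    rw [Finset.sum_sub_distrib, Finset.sum_range_succ', Finset.sum_range_succ]
    simp only [h]
    abel
  simpa [htelescope] using norm_sub_le (X (V 0 x)) (V N (Y x))

theorem asympIntertwines_cesaroIsometry_of_raising (hV : OrthogonalFamily 𝕜 (fun _ => H) V) {m : ℕ}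
    (h : ∀ n ≥ m, ∀ x, X (V n x) = V (n + 1) (Y x)) :
    AsympIntertwines atTop (cesaroIsometry hV) X Y := by
  refine asympIntertwines_cesaroIsometry_of_bounded hV fun x => ?_
  let δ n := X (V n x) - V (n + 1) (Y x)
  have hδ : ∀ n ≥ m, δ n = 0 := fun n hn => sub_eq_zero.2 (h n hn x)
  refine ⟨‖∑ n ∈ Finset.range m, δ n‖ + (‖Y x‖ + ‖Y x‖), ?_⟩
  filter_upwards [eventually_ge_atTop m] with N hN
  have htelescope : ∑ n ∈ Finset.range (N + 1), (X (V n x) - V n (Y x)) =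
      ∑ n ∈ Finset.range m, δ n + (V (N + 1) (Y x) - V 0 (Y x)) := by
    rw [← Finset.sum_range_sub (fun n => V n (Y x)), ← Finset.eventually_constant_sum hδ
      (Nat.le_succ_of_le hN), ← Finset.sum_add_distrib]
    exact Finset.sum_congr rfl fun n _ => by simp [δ]
  rw [htelescope]
  refine (norm_add_le _ _).trans (add_le_add_right ((norm_sub_le _ _).trans ?_) _)
  simp

theorem asympIntertwines_cesaroIsometry_of_eventually_zero
    (hV : OrthogonalFamily 𝕜 (fun _ => H) V) {m : ℕ} (h : ∀ n ≥ m, ∀ x, X (V n x) = 0) :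
    AsympIntertwines atTop (cesaroIsometry hV) X 0 :=
  asympIntertwines_cesaroIsometry_of_raising hV (m := m) fun n hn x => by simp [h n hn x]

end CesaroIsometry

theorem tendsto_mul_of_isCompactOperator {ι 𝕜 E : Type*} [RCLike 𝕜] [NormedAddCommGroup E]
    [NormedSpace 𝕜 E] {l : Filter ι} {X : E →L[𝕜] E} (hX : IsCompactOperator X)
    {P : ι → E →L[𝕜] E} (hP : ∀ n, ‖P n‖ ≤ 1) (hlim : ∀ y, Tendsto (P · y) l (𝓝 y)) :
    Tendsto (fun n => P n * X) l (𝓝 X) := by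
  obtain ⟨K, hK, hXK⟩ := hX.image_closedBall_subset_compact (𝕜₁ := 𝕜) (f := X.toLinearMap) 1
  have hequi : Equicontinuous fun n y => P n y :=
    (LipschitzWith.uniformEquicontinuous _ 1 fun n =>
      (P n).lipschitz.weaken (hP n)).equicontinuous
  have hunif : TendstoUniformlyOn (fun n y => P n y) id l K := by
    have := (EquicontinuousOn.tendsto_uniformOnFun_iff_pi' (𝔖 := {K}) (by simpa using hK)
      (fun K' _ => hequi.equicontinuousOn K') l id).2
      (tendsto_pi_nhds.2 fun y => hlim y)
    exact UniformOnFun.tendsto_iff_tendstoUniformlyOn.1 this K rfl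
  refine Metric.tendsto_nhds.2 fun ε hε => ?_
  filter_upwards [Metric.tendstoUniformlyOn_iff.1 hunif (ε / 2) (half_pos hε)] with n hn
  rw [dist_eq_norm]
  refine lt_of_le_of_lt (ContinuousLinearMap.opNorm_le_of_unit_norm (half_pos hε).le fun x hx => ?_)
    (half_lt_self hε)
  simpa [dist_eq_norm, norm_sub_rev] using (hn (X x) (hXK ⟨x, by simp [hx], rfl⟩)).le

section Language

variable {d : ℕ} {Λ : Set (ℤ → Fin d)} {x y : ℤ → Fin d} {m s : ℤ} {u v w : List (Fin d)}

/-- The word `w` is read off the sequence `x` at the positions `m, …, m + |w| - 1`; the positional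
form of `OccursIn`. -/
def OccursAt (w : List (Fin d)) (x : ℤ → Fin d) (m : ℤ) : Prop :=
  ∀ n (h : n < w.length), x (m + n) = w[n]

theorem occursIn_iff_exists_occursAt : OccursIn w x ↔ ∃ m, OccursAt w x m :=
  exists_congr fun _ => Fin.forall_iff

theorem mem_lang_iff : w ∈ lang Λ ↔ ∃ x ∈ Λ, ∃ m, OccursAt w x m := by
  simp only [lang, occursIn_iff_exists_occursAt, Set.mem_ofPred_eq]

theorem OccursAt.append_left (h : OccursAt (u ++ v) x m) : OccursAt u x m := fun n hn => by
  rw [h n (by simp; omega), List.getElem_append_left hn]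

theorem OccursAt.append_right (h : OccursAt (u ++ v) x m) : OccursAt v x (m + u.length) :=
  fun n hn => by
    have := h (u.length + n) (by simpa using hn)
    rw [List.getElem_append_right (by omega)] at this
    simpa [add_assoc] using this

theorem occursAt_cons {i : Fin d} : OccursAt (i :: w) x m ↔ x m = i ∧ OccursAt w x (m + 1) := by
  refine ⟨fun h => ⟨?_, h.append_right (u := [i])⟩, ?_⟩
  · simpa [-List.getElem_cons_zero] using! h 0 (by simp)
  · rintro ⟨hi, hw⟩ (_ | n) hn
    · simpa using hi
    · simpa [add_assoc, add_comm, add_left_comm] using hw n (by simpa using hn)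

theorem occursAt_shift : OccursAt w (fun t => x (t + s)) m ↔ OccursAt w x (m + s) := by
  simp only [OccursAt, add_right_comm]

theorem OccursAt.congr (h : OccursAt w x m) (hxy : ∀ t, m ≤ t → t < m + w.length → x t = y t) :
    OccursAt w y m := fun n hn => by
  rw [← hxy _ (by omega) (by omega), h n hn]

theorem OccursAt.eqOn (hx : OccursAt w x m) (hy : OccursAt w y m) :
    Set.EqOn x y (Set.Ico m (m + w.length)) := by
  rintro t ⟨hmt, htm⟩
  obtain ⟨n, rfl⟩ := Int.le.dest hmt
  rw [hx n (by omega), hy n (by omega)]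

theorem mem_lang_of_append_left (h : u ++ v ∈ lang Λ) : u ∈ lang Λ :=
  have ⟨x, hx, m, hm⟩ := mem_lang_iff.1 h
  mem_lang_iff.2 ⟨x, hx, m, hm.append_left⟩

theorem mem_lang_of_append_right (h : u ++ v ∈ lang Λ) : v ∈ lang Λ :=
  have ⟨x, hx, m, hm⟩ := mem_lang_iff.1 h
  mem_lang_iff.2 ⟨x, hx, m + u.length, hm.append_right⟩

variable {k : ℕ}

theorem IsKStepSFT.shift_mem (hΛ : IsKStepSFT k Λ) (hx : x ∈ Λ) (s : ℤ) :
    (fun t => x (t + s)) ∈ Λ := by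
  obtain ⟨W, -, -, rfl⟩ := hΛ
  simp only [occursIn_iff_exists_occursAt, Set.mem_ofPred_eq] at hx ⊢
  exact fun w hw ⟨m, hm⟩ => hx w hw ⟨m + s, occursAt_shift.1 hm⟩

theorem IsKStepSFT.splice_mem (hΛ : IsKStepSFT k Λ) (hx : x ∈ Λ) (hy : y ∈ Λ)
    (hxy : Set.EqOn x y (Set.Ico m (m + k))) : (fun t => if t < m + k then x t else y t) ∈ Λ := by
  obtain ⟨W, -, hW, rfl⟩ := hΛ
  simp only [occursIn_iff_exists_occursAt, Set.mem_ofPred_eq] at hx hy ⊢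
  rintro w hw ⟨q, hq⟩
  have hlen := (hW w hw).2
  by_cases hqm : q < m
  · exact hx w hw ⟨q, hq.congr fun t _ _ => if_pos (by omega)⟩
  · refine hy w hw ⟨q, hq.congr fun t hqt _ => ?_⟩
    split_ifs with ht
    · exact hxy ⟨by omega, ht⟩
    · rfl

theorem IsKStepSFT.cons_append_mem_lang (hΛ : IsKStepSFT k Λ) {i : Fin d} {α δ : List (Fin d)}
    (hα : α.length = k) (hiα : i :: α ∈ lang Λ) (hαδ : α ++ δ ∈ lang Λ) :
    i :: (α ++ δ) ∈ lang Λ := by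
  obtain ⟨x, hx, m, hxm⟩ := mem_lang_iff.1 hiα
  obtain ⟨y, hy, p, hyp⟩ := mem_lang_iff.1 hαδ
  obtain ⟨hxi, hxα⟩ := occursAt_cons.1 hxm
  let y' t := y (t + (p - (m + 1)))
  have hy' : OccursAt (α ++ δ) y' (m + 1) := occursAt_shift.2 (by simpa using hyp)
  have hagree : Set.EqOn x y' (Set.Ico (m + 1) (m + 1 + k)) := hα ▸ hxα.eqOn hy'.append_left
  refine mem_lang_iff.2
    ⟨_, hΛ.splice_mem hx (hΛ.shift_mem hy _) hagree, m, occursAt_cons.2 ⟨?_, ?_⟩⟩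
  · rw [if_pos (by omega), hxi]
  · refine hy'.congr fun t hmt _ => ?_
    split_ifs with ht
    · exact (hagree ⟨hmt, ht⟩).symm
    · rfl

theorem IsKStepSFT.cons_mem_lang_iff (hΛ : IsKStepSFT k Λ) {i : Fin d} (hw : w ∈ lang Λ)
    (hkw : k ≤ w.length) : i :: w ∈ lang Λ ↔ i :: w.take k ∈ lang Λ := by
  have hsplit : w.take k ++ w.drop k = w := List.take_append_drop k w
  refine ⟨fun h => mem_lang_of_append_left (v := w.drop k) (by simpa using h), fun h => ?_⟩
  rw [← hsplit] at hw ⊢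
  exact hΛ.cons_append_mem_lang (by simpa using hkw) h hw

end Language

section Relations

variable {d : ℕ} {A : Type*}

theorem wordOp_nil [Monoid A] (T : Fin d → A) : wordOp T [] = 1 := rfl

theorem wordOp_cons [Monoid A] (T : Fin d → A) (i : Fin d) (α : List (Fin d)) :
    wordOp T (i :: α) = T i * wordOp T α := by simp [wordOp]

theorem wordOp_append [Monoid A] (T : Fin d → A) (α β : List (Fin d)) :
    wordOp T (α ++ β) = wordOp T α * wordOp T β := by simp [wordOp]

theorem map_wordOp {B F : Type*} [Monoid A] [Monoid B] [FunLike F A B] [MonoidHomClass F A B]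
    (f : F) (T : Fin d → A) (α : List (Fin d)) :
    f (wordOp T α) = wordOp (fun i => f (T i)) α := by
  simp [wordOp, map_list_prod, Function.comp_def]

theorem sum_ofFn_succ {ι M : Type*} [Fintype ι] [AddCommMonoid M] (n : ℕ) (f : List ι → M) :
    ∑ γ : Fin (n + 1) → ι, f (List.ofFn γ) = ∑ i, ∑ γ : Fin n → ι, f (i :: List.ofFn γ) := by
  rw [← (Fin.consEquiv fun _ => ι).sum_comp, Fintype.sum_prod_type]
  simp [Fin.consEquiv]

theorem Eik_finite (Λ : Set (ℤ → Fin d)) (k : ℕ) (i : Fin d) : (Eik Λ k i).Finite :=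
  (List.finite_length_eq (Fin d) k).subset fun _ h => h.2.1

/-- The defining relations of the `C*`-algebra of a `k`-step subshift of finite type, for a tuple
`T` in a `*`-ring. -/
structure SubshiftRelations [Semiring A] [StarRing A] (Λ : Set (ℤ → Fin d)) (k : ℕ)
    (T : Fin d → A) : Prop where
  wordOp_eq_zero : ∀ α, α ∉ lang Λ → wordOp T α = 0
  star_mul_eq_zero : ∀ i j, i ≠ j → star (T i) * T j = 0
  sum_mul_star : ∑ i, T i * star (T i) = 1
  star_mul_self : ∀ i, star (T i) * T i = ∑ᶠ α ∈ Eik Λ k i, wordOp T α * star (wordOp T α)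

theorem mul_eq_of_isStarProjection_eq_sum_mul_star {ι : Type*} [NormedRing A] [StarRing A]
    [CStarRing A] [PartialOrder A] [StarOrderedRing A] {p : A} (hp : IsStarProjection p)
    {s : Finset ι} {a : ι → A} (h : p = ∑ i ∈ s, a i * star (a i)) {i : ι} (hi : i ∈ s) :
    p * a i = a i := by
  have hcompress : ∑ i ∈ s, (1 - p) * a i * star ((1 - p) * a i) = 0 :=
    calc ∑ i ∈ s, (1 - p) * a i * star ((1 - p) * a i) = (1 - p) * p * star (1 - p) := by
          rw [h, Finset.mul_sum, Finset.sum_mul, ← h]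
          simp only [star_mul, mul_assoc]
      _ = 0 := by rw [sub_mul, one_mul, hp.isIdempotentElem.eq, sub_self, zero_mul]
  have hterm :=
    (Finset.sum_eq_zero_iff_of_nonneg fun j _ => mul_star_self_nonneg _).1 hcompress i hi
  rw [CStarRing.mul_star_self_eq_zero_iff, sub_mul, one_mul, sub_eq_zero] at hterm
  exact hterm.symm

namespace SubshiftRelations

variable {Λ : Set (ℤ → Fin d)} {k : ℕ} {T : Fin d → A}

theorem sum_wordOp_mul_star [Semiring A] [StarRing A] (hT : SubshiftRelations Λ k T) (n : ℕ) :
    ∑ γ : Fin n → Fin d, wordOp T (List.ofFn γ) * star (wordOp T (List.ofFn γ)) = 1 := by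
  induction n with
  | zero => simp [wordOp_nil]
  | succ n ih =>
    calc ∑ γ : Fin (n + 1) → Fin d, wordOp T (List.ofFn γ) * star (wordOp T (List.ofFn γ))
      _ = ∑ i, T i * (∑ γ : Fin n → Fin d,
            wordOp T (List.ofFn γ) * star (wordOp T (List.ofFn γ))) * star (T i) := by
          rw [sum_ofFn_succ n fun w : List (Fin d) => wordOp T w * star (wordOp T w)]
          simp only [wordOp_cons, star_mul, Finset.mul_sum, Finset.sum_mul, mul_assoc]
      _ = 1 := by simpa only [ih, mul_one] using hT.sum_mul_star

theorem mul_star_mul_self [Semiring A] [StarRing A] (hT : SubshiftRelations Λ k T) (i : Fin d) :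
    T i * star (T i) * T i = T i :=
  calc T i * star (T i) * T i = ∑ j, T j * star (T j) * T i := by
        rw [Finset.sum_eq_single_of_mem i (Finset.mem_univ i) fun j _ hji => ?_]
        rw [mul_assoc, hT.star_mul_eq_zero j i hji, mul_zero]
    _ = T i := by rw [← Finset.sum_mul, hT.sum_mul_star, one_mul]

theorem isStarProjection_star_mul_self [Semiring A] [StarRing A] (hT : SubshiftRelations Λ k T)
    (i : Fin d) : IsStarProjection (star (T i) * T i) where
  isIdempotentElem := by
    rw [IsIdempotentElem, mul_assoc, ← mul_assoc (T i), hT.mul_star_mul_self]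
  isSelfAdjoint := .star_mul_self (T i)

theorem star_mul_self_mul_wordOp [NormedRing A] [StarRing A] [CStarRing A] [PartialOrder A]
    [StarOrderedRing A] (hT : SubshiftRelations Λ k T) {i : Fin d} {γ : List (Fin d)}
    (hγ : i :: γ ∈ lang Λ) (hk : k ≤ γ.length) :
    star (T i) * T i * wordOp T γ = wordOp T γ := by
  have hsum : star (T i) * T i =
      ∑ α ∈ (Eik_finite Λ k i).toFinset, wordOp T α * star (wordOp T α) := by
    rw [hT.star_mul_self, finsum_mem_eq_finite_toFinset_sum _ (Eik_finite Λ k i)]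
  have hprefix : i :: γ.take k ∈ lang Λ :=
    mem_lang_of_append_left (v := γ.drop k) (by simpa using hγ)
  have htake : γ.take k ∈ (Eik_finite Λ k i).toFinset :=
    (Eik_finite Λ k i).mem_toFinset.2
      ⟨mem_lang_of_append_right (u := [i]) hprefix, by simpa using hk, hprefix⟩
  rw [← List.take_append_drop k γ, wordOp_append, ← mul_assoc,
    mul_eq_of_isStarProjection_eq_sum_mul_star (hT.isStarProjection_star_mul_self i) hsum htake]

end SubshiftRelations

end Relations

section FockSpace

open scoped Classical in
/-- The basis vector `e_w` of `ℓ²(Λ*)`, extended by `0` to the words `w ∉ Λ*`. -/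
def fockVec {d : ℕ} (Λ : Set (ℤ → Fin d)) (w : List (Fin d)) : ShiftSp Λ :=
  if h : w ∈ lang Λ then eVec Λ ⟨w, h⟩ else 0

variable {d : ℕ} {Λ : Set (ℤ → Fin d)} {w : List (Fin d)}

theorem fockVec_of_mem (h : w ∈ lang Λ) : fockVec Λ w = eVec Λ ⟨w, h⟩ := dif_pos h

theorem fockVec_of_notMem (h : w ∉ lang Λ) : fockVec Λ w = 0 := dif_neg h

theorem inner_eVec (γ : lang Λ) (x : ShiftSp Λ) : inner ℂ (eVec Λ γ) x = x γ := by
  rw [eVec, lp.inner_single_left]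
  simp

open scoped Classical in
theorem inner_fockVec (u w : List (Fin d)) :
    inner ℂ (fockVec Λ u) (fockVec Λ w) = if u = w ∧ w ∈ lang Λ then 1 else 0 := by
  by_cases hw : w ∈ lang Λ
  · by_cases hu : u ∈ lang Λ
    · rw [fockVec_of_mem hu, fockVec_of_mem hw, inner_eVec, eVec, lp.coeFn_single, Pi.single_apply]
      simp [hw]
    · rw [fockVec_of_notMem hu, inner_zero_left, if_neg]
      rintro ⟨rfl, -⟩
      exact hu hw
  · rw [fockVec_of_notMem hw, inner_zero_right, if_neg fun h => hw h.2]

theorem ext_inner_fockVec {x y : ShiftSp Λ}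
    (h : ∀ u, inner ℂ (fockVec Λ u) x = inner ℂ (fockVec Λ u) y) : x = y := by
  refine lp.ext (funext fun γ => ?_)
  simpa only [fockVec_of_mem γ.2, inner_eVec] using h γ

theorem topologicalClosure_span_range_fockVec :
    (Submodule.span ℂ (Set.range (fockVec Λ))).topologicalClosure = ⊤ := by
  refine Submodule.topologicalClosure_eq_top_iff.2 <| (Submodule.eq_bot_iff _).2 fun x hx => ?_
  refine ext_inner_fockVec fun u => ?_
  rw [(Submodule.mem_orthogonal _ x).1 hx _ (Submodule.subset_span ⟨u, rfl⟩), inner_zero_right]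

theorem clm_ext_fockVec {E : Type*} [NormedAddCommGroup E] [NormedSpace ℂ E]
    {X Y : ShiftSp Λ →L[ℂ] E} (h : ∀ w, X (fockVec Λ w) = Y (fockVec Λ w)) : X = Y :=
  ContinuousLinearMap.ext_on
    ((Submodule.dense_iff_topologicalClosure_eq_top).2 topologicalClosure_span_range_fockVec)
    (Set.forall_mem_range.2 h)

/-- The span of the `e_w` with `|w| < m`, a finite-dimensional truncation of `ℓ²(Λ*)`. -/
def lowDegree (Λ : Set (ℤ → Fin d)) (m : ℕ) : Submodule ℂ (ShiftSp Λ) :=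
  Submodule.span ℂ (fockVec Λ '' {w | w.length < m})

instance (m : ℕ) : FiniteDimensional ℂ (lowDegree Λ m) :=
  .span_of_finite ℂ <| (List.finite_length_lt (Fin d) m).image _

variable {m : ℕ}

theorem fockVec_mem_lowDegree (hw : w.length < m) : fockVec Λ w ∈ lowDegree Λ m :=
  Submodule.subset_span ⟨w, hw, rfl⟩

theorem starProjection_lowDegree_of_le (hw : m ≤ w.length) :
    (lowDegree Λ m).starProjection (fockVec Λ w) = 0 := by
  have hortho : lowDegree Λ m ≤ (Submodule.span ℂ {fockVec Λ w})ᗮ := by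
    refine Submodule.span_le.2 (Set.forall_mem_image.2 fun u hu => ?_)
    refine Submodule.mem_orthogonal_singleton_iff_inner_left.2 ?_
    rw [inner_fockVec, if_neg]
    rintro ⟨rfl, -⟩
    exact hw.not_gt hu
  exact (Submodule.starProjection_apply_eq_zero_iff _).2 fun u hu =>
    Submodule.mem_orthogonal_singleton_iff_inner_left.1 (hortho hu)

theorem monotone_lowDegree : Monotone (lowDegree Λ) := fun _ _ hmn =>
  Submodule.span_mono <| Set.image_mono fun _ hw => lt_of_lt_of_le hw hmn

theorem tendsto_starProjection_lowDegree (x : ShiftSp Λ) :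
    Tendsto (fun m => (lowDegree Λ m).starProjection x) atTop (𝓝 x) := by
  refine Submodule.starProjection_tendsto_self (lowDegree Λ) monotone_lowDegree x ?_
  rw [← topologicalClosure_span_range_fockVec (Λ := Λ)]
  refine Submodule.topologicalClosure_mono <| Submodule.span_le.2 <| Set.range_subset_iff.2
    fun w => Submodule.mem_iSup_of_mem (w.length + 1) ?_
  exact fockVec_mem_lowDegree w.length.lt_succ_self

theorem tendsto_star_mul_starProjection_lowDegree {X : ShiftSp Λ →L[ℂ] ShiftSp Λ}
    (hX : IsCompactOperator X) :
    Tendsto (fun m => star X * (lowDegree Λ m).starProjection) atTop (𝓝 (star X)) := by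
  have hstar (m : ℕ) : star (lowDegree Λ m).starProjection = (lowDegree Λ m).starProjection :=
    (isSelfAdjoint_starProjection (lowDegree Λ m)).star_eq
  simpa only [star_mul, hstar] using
    (tendsto_mul_of_isCompactOperator hX (fun m => (lowDegree Λ m).starProjection_norm_le)
      tendsto_starProjection_lowDegree).star

theorem isCompactOperator_of_fockVec_eq_zero {E : Type*} [NormedAddCommGroup E] [NormedSpace ℂ E]
    {X : ShiftSp Λ →L[ℂ] E} (hX : ∀ w : List (Fin d), m ≤ w.length → X (fockVec Λ w) = 0) :
    IsCompactOperator X := by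
  have hfactor : X = X ∘L (lowDegree Λ m).starProjection := clm_ext_fockVec fun w => by
    obtain hw | hw := lt_or_ge w.length m
    · rw [ContinuousLinearMap.comp_apply,
        Submodule.starProjection_eq_self_iff.2 (fockVec_mem_lowDegree hw)]
    · rw [hX w hw, ContinuousLinearMap.comp_apply, starProjection_lowDegree_of_le hw, map_zero]
  have hP : IsCompactOperator (lowDegree Λ m).starProjection :=
    (isCompactOperator_of_locallyCompactSpace_dom (lowDegree Λ m).orthogonalProjectionOnto).clm_comp
      (lowDegree Λ m).subtypeL
  rw [hfactor]
  exact hP.clm_comp X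

/-- The tuple `S` acts on `ℓ²(Λ*)` by concatenation, `S_i e_w = e_{iw}`; the two cases `iw ∈ Λ*`
and `iw ∉ Λ*` are merged by the convention `e_w = 0` for `w ∉ Λ*`. -/
def IsCreationTuple (Λ : Set (ℤ → Fin d)) (S : Fin d → ShiftSp Λ →L[ℂ] ShiftSp Λ) : Prop :=
  ∀ i w, S i (fockVec Λ w) = fockVec Λ (i :: w)

namespace IsCreationTuple

variable {S : Fin d → ShiftSp Λ →L[ℂ] ShiftSp Λ}

theorem of_eVec
    (hS1 : ∀ (i : Fin d) (γ : lang Λ) (h : i :: (γ : List (Fin d)) ∈ lang Λ),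
      S i (eVec Λ γ) = eVec Λ ⟨i :: γ, h⟩)
    (hS0 : ∀ (i : Fin d) (γ : lang Λ), i :: (γ : List (Fin d)) ∉ lang Λ → S i (eVec Λ γ) = 0) :
    IsCreationTuple Λ S := fun i w => by
  by_cases hw : w ∈ lang Λ
  · rw [fockVec_of_mem hw]
    by_cases hiw : i :: w ∈ lang Λ
    · rw [fockVec_of_mem hiw, hS1 i ⟨w, hw⟩ hiw]
    · rw [fockVec_of_notMem hiw, hS0 i ⟨w, hw⟩ hiw]
  · have hiw : i :: w ∉ lang Λ := fun h => hw (mem_lang_of_append_right (u := [i]) h)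
    rw [fockVec_of_notMem hw, fockVec_of_notMem hiw, map_zero]

theorem wordOp_apply_fockVec (hS : IsCreationTuple Λ S) (α w : List (Fin d)) :
    wordOp S α (fockVec Λ w) = fockVec Λ (α ++ w) := by
  induction α with
  | nil => rfl
  | cons i α ih => rw [wordOp_cons, mul_apply_eq_comp, ih, hS, List.cons_append]

theorem star_apply_fockVec_nil (hS : IsCreationTuple Λ S) (i : Fin d) :
    star (S i) (fockVec Λ []) = 0 := ext_inner_fockVec fun u => by
  rw [ContinuousLinearMap.star_eq_adjoint, ContinuousLinearMap.adjoint_inner_right, hS,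
    inner_fockVec, if_neg (by simp), inner_zero_right]

open scoped Classical in
theorem star_apply_fockVec_cons (hS : IsCreationTuple Λ S) (i j : Fin d) (w : List (Fin d)) :
    star (S i) (fockVec Λ (j :: w)) = if i = j ∧ j :: w ∈ lang Λ then fockVec Λ w else 0 := by
  refine ext_inner_fockVec fun u => ?_
  rw [ContinuousLinearMap.star_eq_adjoint, ContinuousLinearMap.adjoint_inner_right, hS,
    inner_fockVec, apply_ite (inner ℂ (fockVec Λ u)), inner_fockVec, inner_zero_right]
  have hw : j :: w ∈ lang Λ → w ∈ lang Λ := mem_lang_of_append_right (u := [j])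
  grind

open scoped Classical in
theorem star_mul_self_apply_fockVec (hS : IsCreationTuple Λ S) (i : Fin d) (w : List (Fin d)) :
    (star (S i) * S i) (fockVec Λ w) = if i :: w ∈ lang Λ then fockVec Λ w else 0 := by
  simp only [mul_apply_eq_comp, hS i w, hS.star_apply_fockVec_cons, true_and]

open scoped Classical in
theorem wordOp_mul_star_apply_fockVec (hS : IsCreationTuple Λ S) (α w : List (Fin d)) :
    (wordOp S α * star (wordOp S α)) (fockVec Λ w) = if α <+: w then fockVec Λ w else 0 := by
  induction α generalizing w with
  | nil => simp [wordOp_nil]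
  | cons i α ih =>
    have hassoc : wordOp S (i :: α) * star (wordOp S (i :: α)) =
        S i * (wordOp S α * star (wordOp S α)) * star (S i) := by
      simp only [wordOp_cons, star_mul, mul_assoc]
    rw [hassoc, mul_apply_eq_comp]
    obtain - | ⟨j, w⟩ := w
    · simp [hS.star_apply_fockVec_nil]
    · rw [hS.star_apply_fockVec_cons, apply_ite (S i * (wordOp S α * star (wordOp S α))),
        mul_apply_eq_comp, ih, apply_ite (S i), hS, map_zero, map_zero]
      have hjw := fockVec_of_notMem (Λ := Λ) (w := j :: w)
      grind

end IsCreationTuple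

end FockSpace

section PoissonMaps

open scoped TensorProduct

/-- The amplification `X ↦ X ⊗ 1` to `E ⊗ H`. The tensor product is not completed, so that there is
no adjoint on its bounded operators and this is only an algebra homomorphism. -/
def rTensorAlgHom (E H : Type*) [NormedAddCommGroup E] [InnerProductSpace ℂ E]
    [NormedAddCommGroup H] [InnerProductSpace ℂ H] :
    (E →L[ℂ] E) →ₐ[ℂ] (E ⊗[ℂ] H →L[ℂ] E ⊗[ℂ] H) :=
  .ofLinearMap
    { toFun X := X.rTensor H
      map_add' := ContinuousLinearMap.rTensor_add H
      map_smul' := ContinuousLinearMap.rTensor_smul H }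
    (ContinuousLinearMap.rTensor_one H) (ContinuousLinearMap.rTensor_mul H)

variable {H : Type*} [NormedAddCommGroup H] [InnerProductSpace ℂ H]

section Amplification

variable {E : Type*} [NormedAddCommGroup E] [InnerProductSpace ℂ E]

theorem rTensorAlgHom_tmul (X : E →L[ℂ] E) (u : E) (x : H) :
    rTensorAlgHom E H X (u ⊗ₜ x) = X u ⊗ₜ x := ContinuousLinearMap.rTensor_tmul ..

theorem norm_rTensorAlgHom_le (X : E →L[ℂ] E) : ‖rTensorAlgHom E H X‖ ≤ ‖X‖ :=
  ContinuousLinearMap.norm_rTensor_le H X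

theorem continuous_rTensorAlgHom : Continuous (rTensorAlgHom E H) :=
  AddMonoidHomClass.continuous_of_bound (rTensorAlgHom E H) 1 fun X => by
    simpa only [one_mul] using norm_rTensorAlgHom_le X

end Amplification

variable [CompleteSpace H] {d k : ℕ} {Λ : Set (ℤ → Fin d)} {T : Fin d → H →L[ℂ] H}

/-- The degree `n` part `x ↦ ∑_{|γ| = n} e_γ ⊗ (T^γ)* x` of the (formal) Poisson kernel of `T`. -/
def poissonMap (Λ : Set (ℤ → Fin d)) (T : Fin d → H →L[ℂ] H) (n : ℕ) :
    H →ₗ[ℂ] ShiftSp Λ ⊗[ℂ] H :=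
  ∑ γ : Fin n → Fin d, TensorProduct.mk ℂ (ShiftSp Λ) H (fockVec Λ (List.ofFn γ)) ∘ₗ
    (star (wordOp T (List.ofFn γ))).toLinearMap

theorem poissonMap_apply (n : ℕ) (x : H) : poissonMap Λ T n x =
    ∑ γ : Fin n → Fin d, fockVec Λ (List.ofFn γ) ⊗ₜ[ℂ] star (wordOp T (List.ofFn γ)) x := by
  simp [poissonMap]

theorem poissonMap_succ_apply (n : ℕ) (x : H) : poissonMap Λ T (n + 1) x =
    ∑ i, ∑ γ : Fin n → Fin d, fockVec Λ (i :: List.ofFn γ) ⊗ₜ[ℂ]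
      star (wordOp T (List.ofFn γ)) (star (T i) x) := by
  rw [poissonMap_apply,
    sum_ofFn_succ n fun w : List (Fin d) => fockVec Λ w ⊗ₜ[ℂ] star (wordOp T w) x]
  simp only [wordOp_cons, star_mul, mul_apply_eq_comp]

theorem rTensorAlgHom_poissonMap_eq_zero {m n : ℕ} (hmn : m ≤ n) {X : ShiftSp Λ →L[ℂ] ShiftSp Λ}
    (hX : ∀ w : List (Fin d), m ≤ w.length → X (fockVec Λ w) = 0) (x : H) :
    rTensorAlgHom (ShiftSp Λ) H X (poissonMap Λ T n x) = 0 := by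
  rw [poissonMap_apply, map_sum]
  refine Finset.sum_eq_zero fun γ _ => ?_
  rw [rTensorAlgHom_tmul, hX _ (by simpa using hmn), TensorProduct.zero_tmul]

theorem inner_poissonMap_of_ne {m n : ℕ} (hmn : m ≠ n) (x y : H) :
    inner ℂ (poissonMap Λ T m x) (poissonMap Λ T n y) = 0 := by
  simp only [poissonMap_apply, sum_inner, inner_sum]
  refine Finset.sum_eq_zero fun γ _ => Finset.sum_eq_zero fun δ _ => ?_
  have hlen : List.ofFn δ ≠ List.ofFn γ := fun h => hmn (by simpa using congrArg List.length h)
  rw [TensorProduct.inner_tmul, inner_fockVec, if_neg fun h => hlen h.1, zero_mul]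

namespace SubshiftRelations

theorem inner_poissonMap_self (hT : SubshiftRelations Λ k T) (n : ℕ) (x y : H) :
    inner ℂ (poissonMap Λ T n x) (poissonMap Λ T n y) = inner ℂ x y := by
  have hterm (γ δ : Fin n → Fin d) : inner ℂ
      (fockVec Λ (List.ofFn γ) ⊗ₜ[ℂ] star (wordOp T (List.ofFn γ)) x)
      (fockVec Λ (List.ofFn δ) ⊗ₜ[ℂ] star (wordOp T (List.ofFn δ)) y) =
      if γ = δ then inner ℂ x ((wordOp T (List.ofFn γ) * star (wordOp T (List.ofFn γ))) y)
      else 0 := by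
    rw [TensorProduct.inner_tmul, inner_fockVec]
    obtain rfl | hγδ := eq_or_ne γ δ
    · by_cases h : List.ofFn γ ∈ lang Λ
      · rw [if_pos ⟨rfl, h⟩, if_pos rfl, one_mul, mul_apply_eq_comp,
          ContinuousLinearMap.star_eq_adjoint, ContinuousLinearMap.adjoint_inner_left]
      · simp [hT.wordOp_eq_zero _ h]
    · simp [hγδ, List.ofFn_inj]
  simp only [poissonMap_apply, sum_inner, inner_sum, hterm, Finset.sum_ite_eq', Finset.mem_univ,
    if_true]
  rw [← inner_sum, ← _root_.sum_apply, hT.sum_wordOp_mul_star, one_apply_eq_self]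

/-- `poissonMap` as an isometry, for a tuple satisfying the subshift relations. -/
def poissonIsometry (hT : SubshiftRelations Λ k T) (n : ℕ) : H →ₗᵢ[ℂ] ShiftSp Λ ⊗[ℂ] H :=
  (poissonMap Λ T n).isometryOfInner (hT.inner_poissonMap_self n)

theorem orthogonalFamily_poissonIsometry (hT : SubshiftRelations Λ k T) :
    OrthogonalFamily ℂ (fun _ => H) hT.poissonIsometry :=
  fun _ _ hmn x y => inner_poissonMap_of_ne hmn x y

variable {S : Fin d → ShiftSp Λ →L[ℂ] ShiftSp Λ}

theorem rTensorAlgHom_star_poissonMap_succ (hT : SubshiftRelations Λ k T)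
    (hS : IsCreationTuple Λ S) (j : Fin d) (n : ℕ) (x : H) :
    rTensorAlgHom (ShiftSp Λ) H (star (S j)) (poissonMap Λ T (n + 1) x) =
      poissonMap Λ T n (star (T j) x) := by
  classical
  rw [poissonMap_succ_apply, map_sum, Finset.sum_eq_single_of_mem j (Finset.mem_univ j),
    poissonMap_apply, map_sum]
  · refine Finset.sum_congr rfl fun γ _ => ?_
    rw [rTensorAlgHom_tmul, hS.star_apply_fockVec_cons]
    by_cases h : j :: List.ofFn γ ∈ lang Λ
    · rw [if_pos ⟨rfl, h⟩]
    · rw [← mul_apply_eq_comp, ← star_mul, ← wordOp_cons, hT.wordOp_eq_zero _ h]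
      simp
  · intro i _ hij
    rw [map_sum]
    refine Finset.sum_eq_zero fun γ _ => ?_
    rw [rTensorAlgHom_tmul, hS.star_apply_fockVec_cons, if_neg fun h => hij h.1.symm,
      TensorProduct.zero_tmul]

theorem rTensorAlgHom_poissonMap (hT : SubshiftRelations Λ k T) (hS : IsCreationTuple Λ S)
    (i : Fin d) {n : ℕ} (hn : k ≤ n) (x : H) :
    rTensorAlgHom (ShiftSp Λ) H (S i) (poissonMap Λ T n x) = poissonMap Λ T (n + 1) (T i x) := by
  rw [poissonMap_succ_apply, Finset.sum_eq_single_of_mem i (Finset.mem_univ i),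
    poissonMap_apply, map_sum]
  · refine Finset.sum_congr rfl fun γ _ => ?_
    rw [rTensorAlgHom_tmul, hS]
    by_cases h : i :: List.ofFn γ ∈ lang Λ
    · have hstar := congrArg star (hT.star_mul_self_mul_wordOp h (by simpa using hn))
      rw [star_mul, star_mul, star_star] at hstar
      conv_lhs => rw [← hstar]
      rfl
    · rw [fockVec_of_notMem h, TensorProduct.zero_tmul, TensorProduct.zero_tmul]
  · intro j _ hji
    refine Finset.sum_eq_zero fun γ _ => ?_
    rw [← mul_apply_eq_comp (star (T j)), hT.star_mul_eq_zero j i hji, _root_.zero_apply, map_zero,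
      TensorProduct.tmul_zero]

end SubshiftRelations

end PoissonMaps

section Representation

variable {d : ℕ} {Λ : Set (ℤ → Fin d)} {S : Fin d → ShiftSp Λ →L[ℂ] ShiftSp Λ}

namespace SubshiftRelations

variable {k : ℕ} {H : Type*} [NormedAddCommGroup H] [InnerProductSpace ℂ H] [CompleteSpace H]
  {T : Fin d → H →L[ℂ] H}

theorem mk_mem_intertwinerGraph (hT : SubshiftRelations Λ k T) (hS : IsCreationTuple Λ S)
    (i : Fin d) :
    (S i, T i) ∈ intertwinerGraph atTop (cesaroIsometry hT.orthogonalFamily_poissonIsometry)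
      (rTensorAlgHom (ShiftSp Λ) H) :=
  ⟨asympIntertwines_cesaroIsometry_of_raising _ fun _ hn => hT.rTensorAlgHom_poissonMap hS i hn,
    asympIntertwines_cesaroIsometry_of_lowering _ (hT.rTensorAlgHom_star_poissonMap_succ hS i)⟩

theorem asympIntertwines_star_zero_of_isCompactOperator (hT : SubshiftRelations Λ k T)
    {X : ShiftSp Λ →L[ℂ] ShiftSp Λ} (hX : IsCompactOperator X) :
    AsympIntertwines atTop (cesaroIsometry hT.orthogonalFamily_poissonIsometry)
      (rTensorAlgHom (ShiftSp Λ) H (star X)) 0 := by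
  refine AsympIntertwines.of_tendsto ((continuous_rTensorAlgHom.tendsto _).comp
    (tendsto_star_mul_starProjection_lowDegree hX)) fun m => ?_
  refine asympIntertwines_cesaroIsometry_of_eventually_zero (m := m) _ fun n hn =>
    rTensorAlgHom_poissonMap_eq_zero hn fun w hw => ?_
  rw [mul_apply_eq_comp, starProjection_lowDegree_of_le hw, map_zero]

theorem exists_starAlgHom_genAlg (hT : SubshiftRelations Λ k T) (hS : IsCreationTuple Λ S) :
    ∃ π : genAlg Λ S →⋆ₐ[ℂ] (H →L[ℂ] H),
      (∀ (a : genAlg Λ S) (i : Fin d), (a : ShiftSp Λ →L[ℂ] ShiftSp Λ) = S i → π a = T i) ∧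
      ∀ a : genAlg Λ S, IsCompactOperator (a : ShiftSp Λ →L[ℂ] ShiftSp Λ) → π a = 0 := by
  obtain ⟨π, hπ⟩ := exists_starAlgHom_mem_intertwinerGraph norm_rTensorAlgHom_le
    (Set.forall_mem_range.2 fun i => ⟨T i, hT.mk_mem_intertwinerGraph hS i⟩)
  refine ⟨π, fun a i ha => ?_, fun a ha => ?_⟩
  · exact ((hT.mk_mem_intertwinerGraph hS i).1.unique (ha ▸ (hπ a).1)).symm
  · have hstar : star (π a) = 0 :=
      ((hT.asympIntertwines_star_zero_of_isCompactOperator ha).unique (hπ a).2).symm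
    rwa [star_eq_zero] at hstar

end SubshiftRelations

/-- The creation operator `S i` as an element of the algebra it generates. -/
def creationGen (Λ : Set (ℤ → Fin d)) (S : Fin d → ShiftSp Λ →L[ℂ] ShiftSp Λ) (i : Fin d) :
    genAlg Λ S :=
  ⟨S i, StarSubalgebra.le_topologicalClosure _ (StarAlgebra.subset_adjoin ℂ _ ⟨i, rfl⟩)⟩

variable {B : Type*} [Ring B] [StarRing B] [Algebra ℂ B] {π : genAlg Λ S →⋆ₐ[ℂ] B}

theorem map_eq_of_eq_on_fockVec
    (hπ : ∀ a : genAlg Λ S, IsCompactOperator (a : ShiftSp Λ →L[ℂ] ShiftSp Λ) → π a = 0)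
    (m : ℕ) {a b : genAlg Λ S} (h : ∀ w ∈ lang Λ, m ≤ w.length →
      (a : ShiftSp Λ →L[ℂ] ShiftSp Λ) (fockVec Λ w) =
        (b : ShiftSp Λ →L[ℂ] ShiftSp Λ) (fockVec Λ w)) : π a = π b := by
  rw [← sub_eq_zero, ← map_sub]
  refine hπ _ (isCompactOperator_of_fockVec_eq_zero (m := m) fun w hwm => ?_)
  by_cases hw : w ∈ lang Λ
  · simpa [sub_eq_zero] using h w hw hwm
  · rw [fockVec_of_notMem hw, map_zero]

theorem coe_creationGen (i : Fin d) :
    (creationGen Λ S i : ShiftSp Λ →L[ℂ] ShiftSp Λ) = S i := rfl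

theorem coe_wordOp_creationGen (α : List (Fin d)) :
    ((wordOp (creationGen Λ S) α : genAlg Λ S) : ShiftSp Λ →L[ℂ] ShiftSp Λ) = wordOp S α :=
  map_wordOp (genAlg Λ S).subtype _ α

theorem IsCreationTuple.sum_mul_star_apply_fockVec (hS : IsCreationTuple Λ S)
    {w : List (Fin d)} (hw : w ≠ []) :
    (∑ i, S i * star (S i)) (fockVec Λ w) = fockVec Λ w := by
  classical
  obtain ⟨j, v, rfl⟩ := List.exists_cons_of_ne_nil hw
  have hterm i : (S i * star (S i)) (fockVec Λ (j :: v)) =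
      if i = j then fockVec Λ (j :: v) else 0 := by
    simpa [wordOp] using hS.wordOp_mul_star_apply_fockVec [i] (j :: v)
  rw [_root_.sum_apply, Finset.sum_congr rfl fun i _ => hterm i, Finset.sum_ite_eq',
    if_pos (Finset.mem_univ j)]

theorem IsCreationTuple.sum_Eik_apply_fockVec {k : ℕ} (hS : IsCreationTuple Λ S)
    (hΛ : IsKStepSFT k Λ) (i : Fin d) {w : List (Fin d)} (hw : w ∈ lang Λ) (hkw : k ≤ w.length) :
    (∑ α ∈ (Eik_finite Λ k i).toFinset, wordOp S α * star (wordOp S α)) (fockVec Λ w) =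
      (star (S i) * S i) (fockVec Λ w) := by
  classical
  have hmem : w.take k ∈ (Eik_finite Λ k i).toFinset ↔ i :: w ∈ lang Λ := by
    have htake : w.take k ∈ lang Λ := mem_lang_of_append_left (v := w.drop k) (by simpa using hw)
    rw [hΛ.cons_mem_lang_iff hw hkw, Set.Finite.mem_toFinset]
    exact ⟨fun h => h.2.2, fun h => ⟨htake, by simpa using hkw, h⟩⟩
  have hterm α (hα : α ∈ (Eik_finite Λ k i).toFinset) :
      (wordOp S α * star (wordOp S α)) (fockVec Λ w) =
        if α = w.take k then fockVec Λ w else 0 := by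
    have hlen : α.length = k := ((Eik_finite Λ k i).mem_toFinset.1 hα).2.1
    simp only [hS.wordOp_mul_star_apply_fockVec, List.prefix_iff_eq_take, hlen]
  rw [_root_.sum_apply, Finset.sum_congr rfl hterm, Finset.sum_ite_eq',
    hS.star_mul_self_apply_fockVec]
  simp only [hmem]

theorem subshiftRelations_of_map_isCompactOperator_eq_zero {k : ℕ} (hS : IsCreationTuple Λ S)
    (hΛ : IsKStepSFT k Λ)
    (hπ : ∀ a : genAlg Λ S, IsCompactOperator (a : ShiftSp Λ →L[ℂ] ShiftSp Λ) → π a = 0) :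
    SubshiftRelations Λ k fun i => π (creationGen Λ S i) where
  wordOp_eq_zero α hα := by
    rw [← map_wordOp, ← map_zero π]
    refine map_eq_of_eq_on_fockVec hπ 0 fun w _ _ => ?_
    rw [coe_wordOp_creationGen, hS.wordOp_apply_fockVec,
      fockVec_of_notMem fun h => hα (mem_lang_of_append_left h)]
    rfl
  star_mul_eq_zero i j hij := by
    rw [← map_star, ← map_mul, ← map_zero π]
    refine map_eq_of_eq_on_fockVec hπ 0 fun w _ _ => ?_
    change star (S i) (S j (fockVec Λ w)) = 0
    classical rw [hS, hS.star_apply_fockVec_cons, if_neg fun h => hij h.1]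
  sum_mul_star := by
    simp only [← map_star, ← map_mul, ← map_sum]
    rw [← map_one π]
    refine map_eq_of_eq_on_fockVec hπ 1 fun w _ hlen => ?_
    rw [AddSubmonoidClass.coe_finsetSum]
    exact hS.sum_mul_star_apply_fockVec (List.ne_nil_of_length_pos hlen)
  star_mul_self i := by
    rw [finsum_mem_eq_finite_toFinset_sum _ (Eik_finite Λ k i)]
    simp only [← map_wordOp, ← map_star, ← map_mul, ← map_sum]
    refine map_eq_of_eq_on_fockVec hπ k fun w hw hlen => ?_
    rw [AddSubmonoidClass.coe_finsetSum]
    simpa only [MulMemClass.coe_mul, StarMemClass.coe_star, coe_wordOp_creationGen,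
      coe_creationGen] using
      (hS.sum_Eik_apply_fockVec hΛ i hw hlen).symm

end Representation

/-- **The representation theory of Matsumoto's subshift C*-algebra for an SFT.**
For a nonempty `k`-step SFT `Λ`, a tuple `(T₁,…,T_d)` of operators on a Hilbert space `H`
arises from a unital `*`-representation of `𝒯_Λ` annihilating the compact operators (i.e. a
representation of `O_Λ = 𝒯_Λ/𝒦`) if and only if it satisfies the relations
`T^α = 0 (α ∉ Λ*)`, `T_i*T_j = 0 (i ≠ j)`, `Σ T_iT_i* = 1`,
`T_i*T_i = Σ_{α ∈ E_i^k} T^α(T^α)*`; moreover such a representation is uniquely determined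
by `T₁,…,T_d`. -/
theorem stmt19 (d k : ℕ) (hd : 1 ≤ d) (hk : 1 ≤ k)
    (Λ : Set (ℤ → Fin d)) (hΛ : IsKStepSFT k Λ) (hne : Λ.Nonempty)
    (S : Fin d → ShiftSp Λ →L[ℂ] ShiftSp Λ)
    (hS1 : ∀ (i : Fin d) (γ : ↥(lang Λ)) (h : (i :: (γ : List (Fin d))) ∈ lang Λ),
      S i (eVec Λ γ) = eVec Λ ⟨i :: (γ : List (Fin d)), h⟩)
    (hS0 : ∀ (i : Fin d) (γ : ↥(lang Λ)), (i :: (γ : List (Fin d))) ∉ lang Λ →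
      S i (eVec Λ γ) = 0)
    {H : Type} [NormedAddCommGroup H] [InnerProductSpace ℂ H] [CompleteSpace H]
    (T : Fin d → H →L[ℂ] H) :
    ((∃ π : ↥(genAlg Λ S) →⋆ₐ[ℂ] (H →L[ℂ] H),
        (∀ (a : ↥(genAlg Λ S)) (i : Fin d),
          (a : ShiftSp Λ →L[ℂ] ShiftSp Λ) = S i → π a = T i) ∧
        (∀ a : ↥(genAlg Λ S),
          IsCompactOperator ⇑(a : ShiftSp Λ →L[ℂ] ShiftSp Λ) → π a = 0)) ↔
      ((∀ α : List (Fin d), α ∉ lang Λ → wordOp T α = 0) ∧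
       (∀ i j : Fin d, i ≠ j → star (T i) * T j = 0) ∧
       ((∑ i : Fin d, T i * star (T i)) = 1) ∧
       (∀ i : Fin d,
         star (T i) * T i = ∑ᶠ α ∈ Eik Λ k i, wordOp T α * star (wordOp T α)))) ∧
    (∀ π₁ π₂ : ↥(genAlg Λ S) →⋆ₐ[ℂ] (H →L[ℂ] H),
      (∀ (a : ↥(genAlg Λ S)) (i : Fin d),
        (a : ShiftSp Λ →L[ℂ] ShiftSp Λ) = S i → π₁ a = T i) →
      (∀ a : ↥(genAlg Λ S),
        IsCompactOperator ⇑(a : ShiftSp Λ →L[ℂ] ShiftSp Λ) → π₁ a = 0) →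
      (∀ (a : ↥(genAlg Λ S)) (i : Fin d),
        (a : ShiftSp Λ →L[ℂ] ShiftSp Λ) = S i → π₂ a = T i) →
      (∀ a : ↥(genAlg Λ S),
        IsCompactOperator ⇑(a : ShiftSp Λ →L[ℂ] ShiftSp Λ) → π₂ a = 0) →
      π₁ = π₂) := by
  have hS := IsCreationTuple.of_eVec hS1 hS0
  refine ⟨⟨?_, ?_⟩, ?_⟩
  · rintro ⟨π, hπS, hπK⟩
    have hπT : (fun i => π (creationGen Λ S i)) = T := funext fun i => hπS _ i rfl
    obtain ⟨h₁, h₂, h₃, h₄⟩ := hπT ▸ subshiftRelations_of_map_isCompactOperator_eq_zero hS hΛ hπK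
    exact ⟨h₁, h₂, h₃, h₄⟩
  · rintro ⟨h₁, h₂, h₃, h₄⟩
    exact SubshiftRelations.exists_starAlgHom_genAlg ⟨h₁, h₂, h₃, h₄⟩ hS
  · intro π₁ π₂ h₁ _ h₂ _
    refine starAlgHom_ext_topologicalClosure_adjoin ?_
    rintro a ⟨i, hi⟩
    exact (h₁ a i hi.symm).trans (h₂ a i hi.symm).symm
end
end
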